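/- Let E be a finite equation set for which there exists an occur-check free run of MMA. Then every run of MMA⁻ on E is correct: if E is not unifiable, the run halts with failure (by action (2)); if E is unifiable, the run ends with an equation set in semi-solved form that has the same solutions as E (in particular, the final set is unifiable). -/

import Mathlib

/-- Finite first-order terms: variables and function applications.
A function symbol is identified by its name together with the number of
arguments it is applied to (fixed arity). -/
inductive Trm : Type where
  | var : ℕ → Trm
  | fn  : ℕ → List Trm → Trm

namespace Trm

/-- `|t|`: the number of occurrences of variables and function symbols
(including constants) in the term `t`. -/
def size : Trm → ℕ
  | .var _ => 1
  | .fn _ ts => 1 + (ts.attach.map (fun ⟨t, _⟩ => size t)).sum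
decreasing_by
  have := List.sizeOf_lt_of_mem ‹_ ∈ ts›
  simp [Trm.fn.sizeOf_spec]; omega

/-- Application of a substitution (a map from variables to terms) to a term. -/
def subst (σ : ℕ → Trm) : Trm → Trm
  | .var x => σ x
  | .fn f ts => .fn f (ts.attach.map (fun ⟨t, _⟩ => subst σ t))
decreasing_by
  have := List.sizeOf_lt_of_mem ‹_ ∈ ts›
  simp [Trm.fn.sizeOf_spec]; omega

/-- The number of occurrences of the variable `x` in a term. -/
def count (x : ℕ) : Trm → ℕ
  | .var y => if y = x then 1 else 0
  | .fn _ ts => (ts.attach.map (fun ⟨t, _⟩ => count x t)).sum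
decreasing_by
  have := List.sizeOf_lt_of_mem ‹_ ∈ ts›
  simp [Trm.fn.sizeOf_spec]; omega

/-- `Occurs x t` : the variable `x` occurs in the term `t`. -/
inductive Occurs (x : ℕ) : Trm → Prop where
  | var : Occurs x (.var x)
  | fn {f : ℕ} {ts : List Trm} {t : Trm} : t ∈ ts → Occurs x t → Occurs x (.fn f ts)

end Trm

/-- The set of variables occurring in a term. -/
def varSet (t : Trm) : Set ℕ := {x | Trm.Occurs x t}

/-- The set of variables occurring in a list (tuple) of terms. -/
def varsL (l : List Trm) : Set ℕ := {x | ∃ t ∈ l, Trm.Occurs x t}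

/-- The number of occurrences of a variable in a list (tuple) of terms. -/
def countL (x : ℕ) (l : List Trm) : ℕ := (l.map (Trm.count x)).sum

/-- A term is ground if no variable occurs in it. -/
def Ground (t : Trm) : Prop := ∀ x, ¬ Trm.Occurs x t

/-- An equation set: a set of equations `s ≐ t` between terms,
represented as pairs of terms. -/
abbrev EqSet := Set (Trm × Trm)

/-- `σ` is a solution (unifier) of the equation set `E`. -/
def Solves (σ : ℕ → Trm) (E : EqSet) : Prop :=
  ∀ e ∈ E, Trm.subst σ e.1 = Trm.subst σ e.2

/-- `E` is unifiable: it has a unifier. -/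
def Unifiable (E : EqSet) : Prop := ∃ σ, Solves σ E

/-- `θ` is a most general unifier of `E`. -/
def IsMgu (θ : ℕ → Trm) (E : EqSet) : Prop :=
  Solves θ E ∧ ∀ σ, Solves σ E → ∃ ρ, ∀ x, σ x = Trm.subst ρ (θ x)

/-- The equation set `s ≐̈ t` pairing corresponding members of two
equal-length tuples of terms. -/
def zipEqs (s t : List Trm) : EqSet := {e | e ∈ s.zip t}

/-- The substitution `{X/t}` mapping `X` to `t` and every other variable
to itself. -/
def single (X : ℕ) (t : Trm) : ℕ → Trm :=
  fun y => if y = X then t else .var y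

/-- The equation set `Eθ`: the substitution applied to both sides of
every equation of `E`. -/
def substE (θ : ℕ → Trm) (E : EqSet) : EqSet :=
  (fun e => (Trm.subst θ e.1, Trm.subst θ e.2)) '' E

/-- One step of the Martelli–Montanari algorithm MMA: actions (1), (3), (4),
(5).  (Actions (2) and (6) halt with failure and produce no next equation
set; their applicability is captured by `ClashApp` and `OccApp` below.)
Two function applications carry the same function symbol iff they have the
same name and the same number of arguments (fixed arity). -/
inductive MMAStep : EqSet → EqSet → Prop where
  /-- Action (1): replace `f(s1,…,sn) ≐ f(t1,…,tn)` by `s1 ≐ t1, …, sn ≐ tn`. -/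
  | decomp {E : EqSet} {f : ℕ} {sl tl : List Trm} :
      (Trm.fn f sl, Trm.fn f tl) ∈ E → sl.length = tl.length →
      MMAStep E ((E \ {(Trm.fn f sl, Trm.fn f tl)}) ∪ {e | e ∈ sl.zip tl})
  /-- Action (3): delete an equation `X ≐ X`. -/
  | delete {E : EqSet} {x : ℕ} :
      (Trm.var x, Trm.var x) ∈ E →
      MMAStep E (E \ {(Trm.var x, Trm.var x)})
  /-- Action (4): replace `t ≐ X` (`t` not a variable) by `X ≐ t`. -/
  | flip {E : EqSet} {t : Trm} {x : ℕ} :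
      (t, Trm.var x) ∈ E → (∀ y, t ≠ Trm.var y) →
      MMAStep E ((E \ {(t, Trm.var x)}) ∪ {(Trm.var x, t)})
  /-- Action (5): on `X ≐ t` with `X ∉ Var(t)` and `X` occurring elsewhere,
  apply `{X/t}` to all other equations. -/
  | elim {E : EqSet} {x : ℕ} {t : Trm} :
      (Trm.var x, t) ∈ E → ¬ Trm.Occurs x t →
      (∃ e ∈ E \ {(Trm.var x, t)}, Trm.Occurs x e.1 ∨ Trm.Occurs x e.2) →
      MMAStep E ({(Trm.var x, t)} ∪ substE (single x t) (E \ {(Trm.var x, t)}))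

/-- Action (2) is applicable to `E`: `E` contains an equation
`f(s1,…,sn) ≐ g(t1,…,tm)` where the two function symbols differ. -/
def ClashApp (E : EqSet) : Prop :=
  ∃ f sl g tl, (Trm.fn f sl, Trm.fn g tl) ∈ E ∧
    (f ≠ g ∨ sl.length ≠ tl.length)

/-- Action (6) (the occur-check) is applicable to `E`: `E` contains an
equation `X ≐ t` with `X ∈ Var(t)` and `X ≠ t`. -/
def OccApp (E : EqSet) : Prop :=
  ∃ x t, (Trm.var x, t) ∈ E ∧ Trm.Occurs x t ∧ t ≠ Trm.var x

/-- One step of the algorithm MMA⁻ (MMA without the occur-check):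
actions (1), (3), (4), (5a), (5b). -/
inductive MMAmStep : EqSet → EqSet → Prop where
  /-- Action (1). -/
  | decomp {E : EqSet} {f : ℕ} {sl tl : List Trm} :
      (Trm.fn f sl, Trm.fn f tl) ∈ E → sl.length = tl.length →
      MMAmStep E ((E \ {(Trm.fn f sl, Trm.fn f tl)}) ∪ {e | e ∈ sl.zip tl})
  /-- Action (3). -/
  | delete {E : EqSet} {x : ℕ} :
      (Trm.var x, Trm.var x) ∈ E →
      MMAmStep E (E \ {(Trm.var x, Trm.var x)})
  /-- Action (4). -/
  | flip {E : EqSet} {t : Trm} {x : ℕ} :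
      (t, Trm.var x) ∈ E → (∀ y, t ≠ Trm.var y) →
      MMAmStep E ((E \ {(t, Trm.var x)}) ∪ {(Trm.var x, t)})
  /-- Action (5a): on `X ≐ Y` with `X, Y` distinct variables and `X`
  occurring elsewhere, apply `{X/Y}` to all other equations. -/
  | elimVar {E : EqSet} {x y : ℕ} :
      (Trm.var x, Trm.var y) ∈ E → x ≠ y →
      (∃ e ∈ E \ {(Trm.var x, Trm.var y)}, Trm.Occurs x e.1 ∨ Trm.Occurs x e.2) →
      MMAmStep E
        ({(Trm.var x, Trm.var y)} ∪
          substE (single x (Trm.var y)) (E \ {(Trm.var x, Trm.var y)}))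
  /-- Action (5b): on `X ≐ t`, `X ≐ u` with `t, u` distinct non-variable
  terms and `|t| ≤ |u|`, replace `X ≐ u` by `t ≐ u`. -/
  | merge {E : EqSet} {x : ℕ} {t u : Trm} :
      (Trm.var x, t) ∈ E → (Trm.var x, u) ∈ E → t ≠ u →
      (∀ y, t ≠ Trm.var y) → (∀ y, u ≠ Trm.var y) → t.size ≤ u.size →
      MMAmStep E ((E \ {(Trm.var x, u)}) ∪ {(t, u)})

/-- `F` is reachable from `E` by (non-failing) actions of MMA. -/
def Reachable (E F : EqSet) : Prop := Relation.ReflTransGen MMAStep E F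

/-- `E` is NSTO: no run of MMA on `E` performs action (6), i.e. the
occur-check action is never applicable along any run. -/
def NSTO (E : EqSet) : Prop := ∀ F, Reachable E F → ¬ OccApp F

/-- `E` is WNSTO: there exists an occur-check free run of MMA on `E`, i.e. a
maximal run that either halts with failure by action (2), or ends with an
equation set to which no action (including (2) and (6)) applies — without
ever performing action (6). -/
def WNSTO (E : EqSet) : Prop :=
  ∃ F, Reachable E F ∧
    (ClashApp F ∨ (¬ ClashApp F ∧ ¬ OccApp F ∧ ∀ F', ¬ MMAStep F F'))

/- `E` is in semi-solved form: `E = {X1 ≐ t1, …, Xn ≐ tn}` where the `Xi`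
are distinct variables, each `Xi` is distinct from `ti`, and whenever `ti`
is a variable, `Xi` occurs only once in the whole equation set. -/
open Classical in
noncomputable def SemiSolved (E : EqSet) : Prop :=
  (∀ e ∈ E, ∃ x t, e = (Trm.var x, t) ∧ t ≠ Trm.var x) ∧
  (∀ e ∈ E, ∀ e' ∈ E, e.1 = e'.1 → e = e') ∧
  (∀ x y, (Trm.var x, Trm.var y) ∈ E →
    ∀ e ∈ E, Trm.count x e.1 + Trm.count x e.2 =
      if e = (Trm.var x, Trm.var y) then 1 else 0)

/-- There exists an occur-check free run of MMA on `E`: a maximal run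
(a maximal sequence of equation sets, each obtained from the previous by an
action) that never performs action (6); thus it either halts with failure
by performing action (2), or ends with an equation set to which no action
of MMA applies. -/
def ExistsOCFreeRun (E : EqSet) : Prop :=
  ∃ L : List EqSet, ∃ F : EqSet,
    L.head? = some E ∧ L.Chain' MMAStep ∧ L.getLast? = some F ∧
    (ClashApp F ∨ (¬ ClashApp F ∧ ¬ OccApp F ∧ ∀ F', ¬ MMAStep F F'))

/-!
Evaluate terms in an arbitrary algebra whose operations are injective, the argument tuple included.
Every action of MMA and of MMA⁻ preserves the solutions in such an algebra, and an equation set with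
a solution in it admits no clash. Besides the algebra of finite terms, a second one matters here:
the algebra of possibly infinite trees, in which a semi-solved set always has a solution, because
it is a system of recursive equations `X = t`, solved by a least fixed point.

So if a run of MMA⁻ on `E` stops without a clash, then `E` is solvable in infinite trees. Therefore
the occur-check free run of MMA on `E` cannot end in a clash either; it ends in a solved form, and
`E` is unifiable.
-/

/-! ### Terms and their values in an algebra -/

namespace Trm

@[elab_as_elim, induction_eliminator]
theorem induction {P : Trm → Prop} (var : ∀ x, P (.var x))
    (fn : ∀ f ts, (∀ t ∈ ts, P t) → P (.fn f ts)) : ∀ t, P t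
  | .var x => var x
  | .fn f ts => fn f ts fun t _ => induction var fn t

variable {M : Type*} (op : ℕ → List M → M) (σ : ℕ → M)

/-- The value of a term in the algebra `(M, op)` under the assignment `σ`. A single `op` takes
argument lists of every length, since a function symbol is a name together with an arity. -/
def eval : Trm → M
  | .var x => σ x
  | .fn f ts => op f (ts.map eval)

@[simp]
theorem eval_var (x : ℕ) : eval op σ (.var x) = σ x := by
  rw [eval]

@[simp]
theorem eval_fn (f : ℕ) (ts : List Trm) :
    eval op σ (.fn f ts) = op f (ts.map (eval op σ)) := by
  rw [eval]

@[simp]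
theorem subst_var (θ : ℕ → Trm) (x : ℕ) : subst θ (.var x) = θ x := by
  rw [subst]

@[simp]
theorem subst_fn (θ : ℕ → Trm) (f : ℕ) (ts : List Trm) :
    subst θ (.fn f ts) = .fn f (ts.map (subst θ)) := by
  rw [subst]
  exact congrArg (Trm.fn f) (List.attach_map_val)

theorem eval_fn_eq_subst (θ : ℕ → Trm) (t : Trm) : eval Trm.fn θ t = subst θ t := by
  induction t with
  | var x => rw [eval_var, subst_var]
  | fn f ts ih => rw [eval_fn, subst_fn, List.map_congr_left ih]

theorem eval_subst (θ : ℕ → Trm) (t : Trm) :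
    eval op σ (subst θ t) = eval op (fun x => eval op σ (θ x)) t := by
  induction t with
  | var x => rw [subst_var, eval_var]
  | fn f ts ih => rw [subst_fn, eval_fn, eval_fn, List.map_map, ← List.map_congr_left ih]; rfl

variable {op σ} in
theorem eval_subst_single {x : ℕ} {t : Trm} (h : σ x = eval op σ t) (s : Trm) :
    eval op σ (subst (single x t) s) = eval op σ s := by
  have hσ : (fun y => eval op σ (single x t y)) = σ := by
    funext y
    unfold single
    split_ifs with hy
    · rw [hy, h]
    · rw [eval_var]
  rw [eval_subst, hσ]

theorem subst_eq_self {θ : ℕ → Trm} {t : Trm} (h : ∀ x, Occurs x t → θ x = .var x) :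
    subst θ t = t := by
  induction t with
  | var x => rw [subst_var, h x .var]
  | fn f ts ih =>
    have hts : ∀ t ∈ ts, subst θ t = id t := fun t ht => ih t ht fun x hx => h x (.fn ht hx)
    rw [subst_fn, List.map_congr_left hts, List.map_id]

theorem count_eq_zero {x : ℕ} {t : Trm} (h : ¬ Occurs x t) : count x t = 0 := by
  induction t with
  | var y =>
    rw [count, if_neg]
    rintro rfl
    exact h .var
  | fn f ts ih =>
    rw [count, List.sum_eq_zero_iff]
    simp only [List.mem_map, List.mem_attach, true_and]
    rintro _ ⟨⟨t, ht⟩, rfl⟩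
    exact ih t ht fun hx => h (.fn ht hx)

variable {op} in
theorem eval_mono [Preorder M]
    (hop : ∀ f l l', List.Forall₂ (· ≤ ·) l l' → op f l ≤ op f l') (t : Trm) :
    Monotone fun σ : ℕ → M => eval op σ t := by
  intro σ τ h
  induction t with
  | var x => simpa only [eval_var] using h x
  | fn f ts ih =>
    simp only [eval_fn]
    refine hop f _ _ ?_
    rwa [List.forall₂_map_left_iff, List.forall₂_map_right_iff, List.forall₂_same]

variable {op} in
theorem exists_eq_eval [CompleteLattice M]
    (hop : ∀ f l l', List.Forall₂ (· ≤ ·) l l' → op f l ≤ op f l') (ρ : ℕ → Trm) :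
    ∃ σ : ℕ → M, ∀ x, σ x = eval op σ (ρ x) := by
  let Φ : (ℕ → M) →o (ℕ → M) :=
    ⟨fun σ x => eval op σ (ρ x), fun _ _ h x => eval_mono hop (ρ x) h⟩
  exact ⟨Φ.lfp, fun x => congrFun Φ.map_lfp.symm x⟩

end Trm

/-! ### Solutions in an algebra -/

/-- `σ` is a solution of `E` in the algebra `(M, op)`; the unifiers of `E` are its solutions in the
algebra of terms. -/
def SolvesIn {M : Type*} (op : ℕ → List M → M) (σ : ℕ → M) (E : EqSet) : Prop :=
  ∀ e ∈ E, Trm.eval op σ e.1 = Trm.eval op σ e.2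

theorem solvesIn_fn_iff {σ : ℕ → Trm} {E : EqSet} : SolvesIn Trm.fn σ E ↔ Solves σ E := by
  simp only [SolvesIn, Solves, Trm.eval_fn_eq_subst]

theorem Trm.fn_injective2 : Function.Injective2 Trm.fn := by
  intro f g sl tl h
  exact Trm.fn.inj h

section SolvesIn

variable {M : Type*} {op : ℕ → List M → M} {σ : ℕ → M} {E F : EqSet}

theorem solvesIn_union : SolvesIn op σ (E ∪ F) ↔ SolvesIn op σ E ∧ SolvesIn op σ F := by
  simp only [SolvesIn, Set.mem_union, or_imp, forall_and]

theorem solvesIn_singleton {e : Trm × Trm} :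
    SolvesIn op σ {e} ↔ Trm.eval op σ e.1 = Trm.eval op σ e.2 := by
  simp only [SolvesIn, Set.mem_singleton_iff, forall_eq]

theorem solvesIn_iff_of_mem {e : Trm × Trm} (he : e ∈ E) :
    SolvesIn op σ E ↔ SolvesIn op σ (E \ {e}) ∧ Trm.eval op σ e.1 = Trm.eval op σ e.2 := by
  rw [← solvesIn_singleton, ← solvesIn_union, Set.sdiff_union_of_subset]
  exact Set.singleton_subset_iff.2 he

theorem solvesIn_zip {sl tl : List Trm} (h : sl.length = tl.length) :
    SolvesIn op σ {e | e ∈ sl.zip tl} ↔ sl.map (Trm.eval op σ) = tl.map (Trm.eval op σ) := by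
  rw [← List.forall₂_eq_eq_eq, List.forall₂_map_left_iff, List.forall₂_map_right_iff,
    List.forall₂_iff_zip]
  simp only [SolvesIn, Set.mem_ofPred_eq, Prod.forall, h, true_and]

theorem solvesIn_substE_single {x : ℕ} {t : Trm} (h : σ x = Trm.eval op σ t) :
    SolvesIn op σ (substE (single x t) E) ↔ SolvesIn op σ E := by
  simp only [SolvesIn, substE, Set.forall_mem_image, Trm.eval_subst_single h]

theorem SolvesIn.not_clashApp (hop : Function.Injective2 op) (h : SolvesIn op σ E) :
    ¬ ClashApp E := by
  rintro ⟨f, sl, g, tl, hmem, hne⟩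
  have heval := h _ hmem
  simp only [Trm.eval_fn] at heval
  obtain ⟨hfg, hargs⟩ := hop heval
  have hlen : sl.length = tl.length := by
    simpa only [List.length_map] using congrArg List.length hargs
  exact hne.elim (· hfg) (· hlen)

theorem MMAStep.solvesIn_iff (hop : Function.Injective2 op) (h : MMAStep E F) :
    SolvesIn op σ E ↔ SolvesIn op σ F := by
  cases h with
  | decomp he hlen =>
    rw [solvesIn_iff_of_mem he, solvesIn_union, solvesIn_zip hlen, Trm.eval_fn, Trm.eval_fn]
    exact and_congr_right' ⟨fun h => (hop h).2, fun h => by rw [h]⟩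
  | delete he => rw [solvesIn_iff_of_mem he, and_iff_left rfl]
  | flip he _ => rw [solvesIn_iff_of_mem he, solvesIn_union, solvesIn_singleton, eq_comm]
  | elim he _ _ =>
    rw [solvesIn_iff_of_mem he, solvesIn_union, solvesIn_singleton, and_comm, Trm.eval_var]
    exact and_congr_right fun hx => (solvesIn_substE_single hx).symm

theorem MMAmStep.solvesIn_iff (hop : Function.Injective2 op) (h : MMAmStep E F) :
    SolvesIn op σ E ↔ SolvesIn op σ F := by
  cases h with
  | decomp he hlen => exact (MMAStep.decomp he hlen).solvesIn_iff hop
  | delete he => exact (MMAStep.delete he).solvesIn_iff hop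
  | flip he ht => exact (MMAStep.flip he ht).solvesIn_iff hop
  | elimVar he hxy hocc =>
    refine (MMAStep.elim he ?_ hocc).solvesIn_iff hop
    rintro ⟨⟩
    exact hxy rfl
  | @merge x t u ht hu hne _ _ _ =>
    rw [solvesIn_iff_of_mem hu, solvesIn_union, solvesIn_singleton]
    refine and_congr_right fun hrest => ?_
    have hxt : Trm.eval op σ (.var x) = Trm.eval op σ t :=
      hrest (.var x, t) ⟨ht, fun h => hne (Prod.ext_iff.1 h).2⟩
    rw [hxt]

theorem solvesIn_iff_of_isChain {R : EqSet → EqSet → Prop}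
    (hR : ∀ ⦃E F⦄, R E F → (SolvesIn op σ E ↔ SolvesIn op σ F)) {L : List EqSet}
    (hhead : L.head? = some E) (hchain : L.IsChain R) (hlast : L.getLast? = some F) :
    SolvesIn op σ E ↔ SolvesIn op σ F := by
  refine hchain.induction (fun G => SolvesIn op σ E ↔ SolvesIn op σ G) L
    (fun _ _ hstep ih => ih.trans (hR hstep)) (fun hne => ?_) F (List.mem_of_getLast? hlast)
  rw [(List.head_eq_iff_head?_eq_some hne).2 hhead]

end SolvesIn

/-! ### Infinite trees -/

/-- Possibly infinite trees over the function symbols: the set of pairs (name, arity) labelling each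
position, a position being a path of argument indices from the root. Allowing any set of labels
instead of at most one, at any set of positions, makes the trees a complete lattice. -/
abbrev InfTree : Type := List ℕ → Set (ℕ × ℕ)

/-- The tree with root symbol `f` and immediate subtrees `ts`. -/
def InfTree.node (f : ℕ) (ts : List InfTree) : InfTree
  | [] => {(f, ts.length)}
  | i :: p => {a | ∃ t ∈ ts[i]?, a ∈ t p}

theorem InfTree.node_injective2 : Function.Injective2 InfTree.node := by
  intro f g ts us h
  have hroot : f = g ∧ ts.length = us.length := by
    simpa only [node, Set.singleton_eq_singleton_iff, Prod.mk.injEq] using congrFun h []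
  refine ⟨hroot.1, List.ext_getElem hroot.2 fun i hts hus => funext fun p => ?_⟩
  simpa [node, hts, hus] using congrFun h (i :: p)

theorem InfTree.node_mono (f : ℕ) (ts us : List InfTree) (h : List.Forall₂ (· ≤ ·) ts us) :
    node f ts ≤ node f us := by
  rintro (_ | ⟨i, p⟩) a ha
  · simpa only [node, h.length_eq] using ha
  · obtain ⟨t, ht, hat⟩ := ha
    obtain ⟨hts, rfl⟩ := List.getElem?_eq_some_iff.1 ht
    have hus : i < us.length := h.length_eq ▸ hts
    exact ⟨us[i], List.getElem?_eq_getElem hus, h.get hts hus p hat⟩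

/-! ### Final equation sets -/

theorem exists_subst_of_injOn_fst {F : EqSet} (hF : F.InjOn Prod.fst) :
    ∃ ρ : ℕ → Trm, ∀ x, (∀ t, (.var x, t) ∈ F → ρ x = t) ∧
      ((∀ t, (.var x, t) ∉ F) → ρ x = .var x) := by
  have hx : ∀ x, ∃ r, (∀ t, (.var x, t) ∈ F → r = t) ∧ ((∀ t, (.var x, t) ∉ F) → r = .var x) := by
    intro x
    by_cases h : ∃ t, (Trm.var x, t) ∈ F
    · obtain ⟨r, hr⟩ := h
      exact ⟨r, fun t ht => (Prod.ext_iff.1 (hF hr ht rfl)).2, fun hnot => absurd hr (hnot r)⟩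
    · exact ⟨.var x, fun t ht => absurd ⟨t, ht⟩ h, fun _ => rfl⟩
  choose ρ hρ using hx
  exact ⟨ρ, hρ⟩

theorem SemiSolved.exists_solvesIn_node {F : EqSet} (hF : SemiSolved F) :
    ∃ σ, SolvesIn InfTree.node σ F := by
  obtain ⟨hform, hinj, -⟩ := hF
  obtain ⟨ρ, hρ⟩ := exists_subst_of_injOn_fst fun e he e' he' => hinj e he e' he'
  obtain ⟨σ, hσ⟩ := Trm.exists_eq_eval InfTree.node_mono ρ
  refine ⟨σ, fun e he => ?_⟩
  obtain ⟨x, t, rfl, -⟩ := hform e he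
  rw [Trm.eval_var, hσ, (hρ x).1 t he]

theorem eq_var_or_clashApp_or_exists_step {F : EqSet} {e : Trm × Trm} (he : e ∈ F) :
    (∃ x t, e = (.var x, t) ∧ t ≠ .var x) ∨ ClashApp F ∨
      ∃ F', MMAStep F F' ∧ MMAmStep F F' := by
  obtain ⟨s | ⟨f, sl⟩, t⟩ := e
  · by_cases ht : t = .var s
    · subst ht
      exact .inr (.inr ⟨_, .delete he, .delete he⟩)
    · exact .inl ⟨s, t, rfl, ht⟩
  · obtain y | ⟨g, tl⟩ := t
    · exact .inr (.inr ⟨_, .flip he (by simp), .flip he (by simp)⟩)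
    · by_cases h : f = g ∧ sl.length = tl.length
      · obtain ⟨rfl, hlen⟩ := h
        exact .inr (.inr ⟨_, .decomp he hlen, .decomp he hlen⟩)
      · exact .inr (.inl ⟨f, sl, g, tl, he, not_and_or.1 h⟩)

theorem not_occurs_of_not_mmamStep {F : EqSet} (hstep : ∀ F', ¬ MMAmStep F F') {x y : ℕ}
    (hxy : (.var x, .var y) ∈ F) {e : Trm × Trm} (he : e ∈ F) (hne : e ≠ (.var x, .var y)) :
    ¬ Trm.Occurs x e.1 ∧ ¬ Trm.Occurs x e.2 := by
  rw [← not_or]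
  intro hocc
  refine hstep _ (.elimVar hxy ?_ ⟨e, ⟨he, hne⟩, hocc⟩)
  rintro rfl
  exact hstep _ (.delete hxy)

theorem rhs_unique_of_not_mmamStep {F : EqSet} (hstep : ∀ F', ¬ MMAmStep F F') {x : ℕ} {t u : Trm}
    (ht : (.var x, t) ∈ F) (hu : (.var x, u) ∈ F) : t = u := by
  by_contra hne
  have htu : (Trm.var x, t) ≠ (Trm.var x, u) := fun h => hne (Prod.ext_iff.1 h).2
  have ht_var : ∀ y, t ≠ .var y := by
    rintro y rfl
    exact (not_occurs_of_not_mmamStep hstep ht hu htu.symm).1 .var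
  have hu_var : ∀ y, u ≠ .var y := by
    rintro y rfl
    exact (not_occurs_of_not_mmamStep hstep hu ht htu).1 .var
  rcases le_total t.size u.size with h | h
  · exact hstep _ (.merge ht hu hne ht_var hu_var h)
  · exact hstep _ (.merge hu ht (Ne.symm hne) hu_var ht_var h)

theorem semiSolved_of_not_mmamStep {F : EqSet} (hclash : ¬ ClashApp F)
    (hstep : ∀ F', ¬ MMAmStep F F') : SemiSolved F := by
  have hform : ∀ e ∈ F, ∃ x t, e = (.var x, t) ∧ t ≠ .var x := fun e he =>
    (eq_var_or_clashApp_or_exists_step he).resolve_right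
      (not_or.2 ⟨hclash, fun ⟨F', _, h⟩ => hstep F' h⟩)
  refine ⟨hform, fun e he e' he' hfst => ?_, fun x y hxy e he => ?_⟩
  · obtain ⟨x, t, rfl, -⟩ := hform e he
    obtain ⟨y, u, rfl, -⟩ := hform e' he'
    obtain rfl : x = y := Trm.var.inj hfst
    rw [rhs_unique_of_not_mmamStep hstep he he']
  · split_ifs with heq
    · have hyx : y ≠ x := by
        rintro rfl
        exact hstep _ (.delete hxy)
      rw [heq, Trm.count, Trm.count, if_pos rfl, if_neg hyx]
    · obtain ⟨hleft, hright⟩ := not_occurs_of_not_mmamStep hstep hxy he heq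
      rw [Trm.count_eq_zero hleft, Trm.count_eq_zero hright]

theorem unifiable_of_not_mmaStep {F : EqSet} (hclash : ¬ ClashApp F) (hocc : ¬ OccApp F)
    (hstep : ∀ F', ¬ MMAStep F F') : Unifiable F := by
  have hform : ∀ e ∈ F, ∃ x t, e = (.var x, t) ∧ t ≠ .var x := fun e he =>
    (eq_var_or_clashApp_or_exists_step he).resolve_right
      (not_or.2 ⟨hclash, fun ⟨F', h, _⟩ => hstep F' h⟩)
  have hacyclic : ∀ x t, (.var x, t) ∈ F → ¬ Trm.Occurs x t := by
    intro x t he hx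
    obtain ⟨y, u, heq, hne⟩ := hform _ he
    obtain ⟨⟨⟩, rfl⟩ := Prod.mk.inj heq
    exact hocc ⟨x, t, he, hx, hne⟩
  have hisolated : ∀ x t, (.var x, t) ∈ F → ∀ e ∈ F,
      Trm.Occurs x e.1 ∨ Trm.Occurs x e.2 → e = (.var x, t) := by
    intro x t hxt e he hx
    by_contra hne
    exact hstep _ (.elim hxt (hacyclic x t hxt) ⟨e, ⟨he, hne⟩, hx⟩)
  have hinj : F.InjOn Prod.fst := by
    intro e he e' he' hfst
    obtain ⟨x, t, rfl, -⟩ := hform e he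
    refine (hisolated x t he e' he' (.inl ?_)).symm
    rw [← hfst]
    exact .var
  obtain ⟨ρ, hρ⟩ := exists_subst_of_injOn_fst hinj
  refine ⟨ρ, fun e he => ?_⟩
  obtain ⟨x, t, rfl, -⟩ := hform e he
  have hfix : ∀ y, Trm.Occurs y t → ρ y = .var y := by
    refine fun y hy => (hρ y).2 fun u hyu => ?_
    obtain ⟨⟨⟩, rfl⟩ := Prod.mk.inj (hisolated y u hyu _ he (.inr hy))
    exact hacyclic x t he hy
  rw [Trm.subst_var, (hρ x).1 t he, Trm.subst_eq_self hfix]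

/-! ### Correctness of MMA⁻ -/

theorem ExistsOCFreeRun.unifiable_of_solvesIn {M : Type*} {op : ℕ → List M → M} {σ : ℕ → M}
    {E : EqSet} (hE : ExistsOCFreeRun E) (hop : Function.Injective2 op) (hσ : SolvesIn op σ E) :
    Unifiable E := by
  obtain ⟨L, F, hhead, hchain, hlast, hfinal⟩ := hE
  have hσF : SolvesIn op σ F :=
    (solvesIn_iff_of_isChain (fun _ _ h => h.solvesIn_iff hop) hhead hchain hlast).1 hσ
  obtain ⟨hclash, hocc, hstep⟩ := hfinal.resolve_left (hσF.not_clashApp hop)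
  obtain ⟨θ, hθ⟩ := unifiable_of_not_mmaStep hclash hocc hstep
  rw [← solvesIn_fn_iff] at hθ
  exact ⟨θ, solvesIn_fn_iff.1 <| (solvesIn_iff_of_isChain
    (fun _ _ h => h.solvesIn_iff Trm.fn_injective2) hhead hchain hlast).2 hθ⟩

theorem stmt8_general (E : EqSet) (hocf : ExistsOCFreeRun E) :
    ∀ (L : List EqSet) (F : EqSet),
      L.head? = some E → L.IsChain MMAmStep → L.getLast? = some F →
      (ClashApp F ∨ (¬ ClashApp F ∧ ∀ F', ¬ MMAmStep F F')) →
      ((¬ Unifiable E → ClashApp F) ∧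
       (Unifiable E →
          ¬ ClashApp F ∧ SemiSolved F ∧
          (∀ σ, Solves σ F ↔ Solves σ E) ∧ Unifiable F)) := by
  intro L F hhead hchain hlast hfinal
  have hsolvesIn {M : Type} {op : ℕ → List M → M} (hop : Function.Injective2 op) (σ : ℕ → M) :
      SolvesIn op σ E ↔ SolvesIn op σ F :=
    solvesIn_iff_of_isChain (fun _ _ h => h.solvesIn_iff hop) hhead hchain hlast
  have hsolves : ∀ σ, Solves σ F ↔ Solves σ E := fun σ => by
    rw [← solvesIn_fn_iff, ← solvesIn_fn_iff, hsolvesIn Trm.fn_injective2]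
  refine ⟨fun hE => ?_, fun ⟨θ, hθ⟩ => ?_⟩
  · by_contra hclash
    have hsemi := semiSolved_of_not_mmamStep hclash (hfinal.resolve_left hclash).2
    obtain ⟨σ, hσ⟩ := hsemi.exists_solvesIn_node
    exact hE (hocf.unifiable_of_solvesIn InfTree.node_injective2
      ((hsolvesIn InfTree.node_injective2 σ).2 hσ))
  · have hθF : Solves θ F := (hsolves θ).2 hθ
    have hclash : ¬ ClashApp F := (solvesIn_fn_iff.2 hθF).not_clashApp Trm.fn_injective2
    exact ⟨hclash, semiSolved_of_not_mmamStep hclash (hfinal.resolve_left hclash).2,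
      hsolves, θ, hθF⟩

/-- Let `E` be a finite equation set for which there exists an occur-check free
run of MMA.  Then every run of MMA⁻ on `E` is correct.  A run of MMA⁻ is a
maximal sequence `L` of equation sets starting with `E`, consecutive sets
related by an action of MMA⁻, whose last set `F` either has action (2)
performed on it (the run halts with failure) or admits no action of MMA⁻.
Correctness: if `E` is not unifiable the run halts with failure; if `E` is
unifiable the run does not fail and ends with an equation set in semi-solved
form that has the same solutions as `E` (in particular, `F` is unifiable). -/
theorem stmt8 (E : EqSet) (hfin : E.Finite) (hocf : ExistsOCFreeRun E) :
    ∀ (L : List EqSet) (F : EqSet),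
      L.head? = some E → L.Chain' MMAmStep → L.getLast? = some F →
      (ClashApp F ∨ (¬ ClashApp F ∧ ∀ F', ¬ MMAmStep F F')) →
      ((¬ Unifiable E → ClashApp F) ∧
       (Unifiable E →
          ¬ ClashApp F ∧ SemiSolved F ∧
          (∀ σ, Solves σ F ↔ Solves σ E) ∧ Unifiable F)) := by
  exact stmt8_general E hocf
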